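/- Let W, Z₁,…,Z_{k+1} be finite-valued random variables such that Z₁,…,Z_{k+1} are conditionally i.i.d. given W (i.e., exchangeable and conditionally independent with identical conditional laws given W). Then I(W; Z_{k+1} | Z₁,…,Z_k) = I(W; Z_k | Z₁,…,Z_{k-1}) - I(Z_{k+1}; Z_k | Z₁,…,Z_{k-1}). -/

import Mathlib

open Finset

/-- Probability that a finite-valued random variable `X` on the finite
sample space `Ω` (with pmf `p`) takes the value `x`. -/
noncomputable def probOf {Ω α : Type*} [Fintype Ω] [DecidableEq α]
    (p : Ω → ℝ) (X : Ω → α) (x : α) : ℝ :=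
  ∑ ω, if X ω = x then p ω else 0

/-- Shannon entropy (natural logarithm) of a finite-valued random variable. -/
noncomputable def entropy {Ω α : Type*} [Fintype Ω] [Fintype α] [DecidableEq α]
    (p : Ω → ℝ) (X : Ω → α) : ℝ :=
  -∑ x, probOf p X x * Real.log (probOf p X x)

/-- Conditional Shannon entropy `H(X | Y)`. -/
noncomputable def condEntropy {Ω α β : Type*} [Fintype Ω] [Fintype α] [DecidableEq α]
    [Fintype β] [DecidableEq β] (p : Ω → ℝ) (X : Ω → α) (Y : Ω → β) : ℝ :=
  entropy p (fun ω => (X ω, Y ω)) - entropy p Y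

/-- Mutual information `I(X; Y)`. -/
noncomputable def mutualInfo {Ω α β : Type*} [Fintype Ω] [Fintype α] [DecidableEq α]
    [Fintype β] [DecidableEq β] (p : Ω → ℝ) (X : Ω → α) (Y : Ω → β) : ℝ :=
  entropy p X + entropy p Y - entropy p (fun ω => (X ω, Y ω))

/-- Conditional mutual information `I(X; Y | Z)`. -/
noncomputable def condMI {Ω α β γ : Type*} [Fintype Ω] [Fintype α] [DecidableEq α]
    [Fintype β] [DecidableEq β] [Fintype γ] [DecidableEq γ]
    (p : Ω → ℝ) (X : Ω → α) (Y : Ω → β) (Z : Ω → γ) : ℝ :=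
  condEntropy p X Z + condEntropy p Y Z - condEntropy p (fun ω => (X ω, Y ω)) Z

/-- `p` is a probability mass function. -/
def IsPMF {Ω : Type*} [Fintype Ω] (p : Ω → ℝ) : Prop :=
  (∀ ω, 0 ≤ p ω) ∧ ∑ ω, p ω = 1

lemma aux_entropy_inj {Ω α β : Type*} [Fintype Ω] [Fintype α] [DecidableEq α]
    [Fintype β] [DecidableEq β] (p : Ω → ℝ) (X : Ω → α) (Y : Ω → β) (e : α → β)
    (he : Function.Injective e) (h : ∀ ω, Y ω = e (X ω)) :
    entropy p Y = entropy p X := by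
  unfold entropy
  congr 1
  symm
  apply Fintype.sum_of_injective e he
  · intro b hb
    have : probOf p Y b = 0 := by
      unfold probOf
      apply Finset.sum_eq_zero
      intro ω _
      rw [if_neg]
      intro h'
      exact hb ⟨X ω, by rw [← h, h']⟩
    rw [this, zero_mul]
  · intro a
    have : probOf p Y (e a) = probOf p X a := by
      unfold probOf
      simp only [h, he.eq_iff]
    rw [this]

lemma aux_marg {𝓩 : Type*} [Fintype 𝓩] [DecidableEq 𝓩] {n N : ℕ} (q : 𝓩 → ℝ)
    (hq : ∑ y, q y = 1) (f : Fin n → Fin N) (hf : Function.Injective f) (z : Fin n → 𝓩) :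
    (∑ x : Fin N → 𝓩, if (fun j => x (f j)) = z then ∏ i, q (x i) else 0)
      = ∏ j, q (z j) := by
  classical
  have h1 : ∀ x : Fin N → 𝓩, (if (fun j => x (f j)) = z then ∏ i, q (x i) else 0)
      = ∏ i, (if ∀ j, f j = i → x i = z j then q (x i) else 0) := by
    intro x
    split_ifs with hx
    · apply Finset.prod_congr rfl
      intro i _
      rw [if_pos]
      rintro j rfl
      exact congrFun hx j
    · symm
      obtain ⟨j, hj⟩ := Function.ne_iff.mp hx
      apply Finset.prod_eq_zero (Finset.mem_univ (f j))
      rw [if_neg]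
      intro h
      exact hj (h j rfl)
  simp_rw [h1]
  have h2 := Finset.prod_univ_sum (fun _ : Fin N => (Finset.univ : Finset 𝓩))
    (fun i y => if ∀ j, f j = i → y = z j then q y else 0)
  rw [Fintype.piFinset_univ] at h2
  rw [← h2]
  symm
  apply Fintype.prod_of_injective f hf
  · intro i hi
    rw [← hq]
    apply Finset.sum_congr rfl
    intro y _
    rw [if_pos]
    intro j hj
    exact absurd ⟨j, hj⟩ hi
  · intro j
    simp [hf.eq_iff]

lemma aux_prob {𝓦 𝓩 : Type*} [Fintype 𝓦] [DecidableEq 𝓦] [Fintype 𝓩] [DecidableEq 𝓩]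
    {n N : ℕ} (π : 𝓦 → ℝ) (q : 𝓦 → 𝓩 → ℝ) (hq : ∀ w, IsPMF (q w))
    (f : Fin n → Fin N) (hf : Function.Injective f) (w : 𝓦) (z : Fin n → 𝓩) :
    probOf (fun ωf : 𝓦 × (Fin N → 𝓩) => π ωf.1 * ∏ i, q ωf.1 (ωf.2 i))
      (fun ωf => (ωf.1, fun j => ωf.2 (f j))) (w, z) = π w * ∏ j, q w (z j) := by
  unfold probOf
  rw [Fintype.sum_prod_type, Finset.sum_eq_single w]
  · rw [← aux_marg (q w) (hq w).2 f hf z, Finset.mul_sum]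
    apply Finset.sum_congr rfl
    intro x _
    simp [Prod.ext_iff]
  · intro b _ hb
    simp [hb]
  · simp

lemma aux_prob' {𝓦 𝓩 : Type*} [Fintype 𝓦] [DecidableEq 𝓦] [Fintype 𝓩] [DecidableEq 𝓩]
    {n N : ℕ} (π : 𝓦 → ℝ) (q : 𝓦 → 𝓩 → ℝ) (hq : ∀ w, IsPMF (q w))
    (f : Fin n → Fin N) (hf : Function.Injective f) (z : Fin n → 𝓩) :
    probOf (fun ωf : 𝓦 × (Fin N → 𝓩) => π ωf.1 * ∏ i, q ωf.1 (ωf.2 i))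
      (fun ωf => fun j => ωf.2 (f j)) z = ∑ w, π w * ∏ j, q w (z j) := by
  unfold probOf
  rw [Fintype.sum_prod_type]
  apply Finset.sum_congr rfl
  intro w _
  rw [← aux_marg (q w) (hq w).2 f hf z, Finset.mul_sum]
  apply Finset.sum_congr rfl
  intro x _
  simp

/-- Sum form of minus the joint entropy of `W` and `n` draws. -/
noncomputable def auxF {𝓦 𝓩 : Type*} [Fintype 𝓦] [Fintype 𝓩] (π : 𝓦 → ℝ) (q : 𝓦 → 𝓩 → ℝ)
    (n : ℕ) : ℝ :=
  ∑ w, ∑ z : Fin n → 𝓩, (π w * ∏ j, q w (z j)) * Real.log (π w * ∏ j, q w (z j))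

lemma aux_mul_log (a b : ℝ) :
    (a * b) * Real.log (a * b) = b * (a * Real.log a) + a * (b * Real.log b) := by
  by_cases ha : a = 0
  · simp [ha]
  by_cases hb : b = 0
  · simp [hb]
  rw [Real.log_mul ha hb]
  ring

lemma aux_sum_prod {𝓩 : Type*} [Fintype 𝓩] (n : ℕ) (q : 𝓩 → ℝ) (hq : ∑ y, q y = 1) :
    ∑ z : Fin n → 𝓩, ∏ j, q (z j) = 1 := by
  classical
  have h2 := Finset.prod_univ_sum (fun _ : Fin n => (Finset.univ : Finset 𝓩))
    (fun _ y => q y)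
  rw [Fintype.piFinset_univ] at h2
  rw [← h2]
  simp [hq]

lemma auxF_succ {𝓦 𝓩 : Type*} [Fintype 𝓦] [Fintype 𝓩] (π : 𝓦 → ℝ) (q : 𝓦 → 𝓩 → ℝ)
    (hq : ∀ w, IsPMF (q w)) (n : ℕ) :
    auxF π q (n + 1) = auxF π q n + ∑ w, π w * ∑ y, q w y * Real.log (q w y) := by
  unfold auxF
  rw [← Finset.sum_add_distrib]
  apply Finset.sum_congr rfl
  intro w _
  rw [← (Fin.consEquiv (fun _ : Fin (n + 1) => 𝓩)).sum_comp, Fintype.sum_prod_type]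
  have h : ∀ (y : 𝓩) (z : Fin n → 𝓩),
      (π w * ∏ j, q w ((Fin.consEquiv (fun _ : Fin (n + 1) => 𝓩)) (y, z) j))
        = (π w * ∏ j, q w (z j)) * q w y := by
    intro y z
    rw [Fin.prod_univ_succ]
    simp [Fin.consEquiv]
    ring
  simp_rw [h, aux_mul_log _ (q w _), Finset.sum_add_distrib, ← Finset.mul_sum, ← Finset.sum_mul,
    ← Finset.mul_sum]
  rw [(hq w).2, aux_sum_prod n (q w) (hq w).2]
  ring

lemma aux_ent {𝓦 𝓩 : Type*} [Fintype 𝓦] [DecidableEq 𝓦] [Fintype 𝓩] [DecidableEq 𝓩]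
    {n N : ℕ} (π : 𝓦 → ℝ) (q : 𝓦 → 𝓩 → ℝ) (hq : ∀ w, IsPMF (q w))
    (f : Fin n → Fin N) (hf : Function.Injective f) :
    entropy (fun ωf : 𝓦 × (Fin N → 𝓩) => π ωf.1 * ∏ i, q ωf.1 (ωf.2 i))
      (fun ωf => (ωf.1, fun j => ωf.2 (f j))) = - auxF π q n := by
  unfold entropy auxF
  rw [Fintype.sum_prod_type]
  simp_rw [aux_prob π q hq f hf]

lemma aux_ent' {𝓦 𝓩 : Type*} [Fintype 𝓦] [DecidableEq 𝓦] [Fintype 𝓩] [DecidableEq 𝓩]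
    {n N : ℕ} (π : 𝓦 → ℝ) (q : 𝓦 → 𝓩 → ℝ) (hq : ∀ w, IsPMF (q w))
    (f g : Fin n → Fin N) (hf : Function.Injective f) (hg : Function.Injective g) :
    entropy (fun ωf : 𝓦 × (Fin N → 𝓩) => π ωf.1 * ∏ i, q ωf.1 (ωf.2 i))
      (fun ωf => fun j => ωf.2 (f j)) =
    entropy (fun ωf : 𝓦 × (Fin N → 𝓩) => π ωf.1 * ∏ i, q ωf.1 (ωf.2 i))
      (fun ωf => fun j => ωf.2 (g j)) := by
  unfold entropy
  simp_rw [aux_prob' π q hq f hf, aux_prob' π q hq g hg]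

lemma aux_split_inj {𝓩 : Type*} (n : ℕ) : Function.Injective
    (fun z : Fin (n + 1) → 𝓩 => (z (Fin.last n), fun i : Fin n => z i.castSucc)) := by
  intro a b h
  simp only [Prod.mk.injEq] at h
  funext i
  refine Fin.lastCases h.1 (fun j => congrFun h.2 j) i

/-- MI recursion (Lemma 3): under the joint law `p(w) ∏_{i=1}^{k+1} p(zᵢ|w)`,
`I(W; Z_{k+1} | Z^k) = I(W; Z_k | Z^{k-1}) - I(Z_{k+1}; Z_k | Z^{k-1})`. -/
theorem condMI_recursion {𝓦 𝓩 : Type*} [Fintype 𝓦] [DecidableEq 𝓦] [Fintype 𝓩] [DecidableEq 𝓩]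
    (k : ℕ) (hk : 1 ≤ k) (π : 𝓦 → ℝ) (q : 𝓦 → 𝓩 → ℝ)
    (hπ : IsPMF π) (hq : ∀ w, IsPMF (q w))
    (p : 𝓦 × (Fin (k + 1) → 𝓩) → ℝ)
    (hp : p = fun ωf => π ωf.1 * ∏ i, q ωf.1 (ωf.2 i)) :
    condMI p (fun ωf => ωf.1) (fun ωf => ωf.2 (Fin.last k))
        (fun ωf => fun i : Fin k => ωf.2 ⟨i, by omega⟩)
      = condMI p (fun ωf => ωf.1) (fun ωf => ωf.2 ⟨k - 1, by omega⟩)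
          (fun ωf => fun i : Fin (k - 1) => ωf.2 ⟨i, by omega⟩)
        - condMI p (fun ωf => ωf.2 (Fin.last k)) (fun ωf => ωf.2 ⟨k - 1, by omega⟩)
            (fun ωf => fun i : Fin (k - 1) => ωf.2 ⟨i, by omega⟩) := by
  subst hp
  obtain ⟨m, rfl⟩ : ∃ m, k = m + 1 := ⟨k - 1, by omega⟩
  simp only [condMI, condEntropy]
  set P : 𝓦 × (Fin (m + 1 + 1) → 𝓩) → ℝ :=
    fun ωf => π ωf.1 * ∏ i, q ωf.1 (ωf.2 i) with hP
  -- joint entropies with `W`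
  have e1 : entropy P (fun ωf => (ωf.1, fun i : Fin (m + 1) => ωf.2 ⟨i, by omega⟩))
      = - auxF π q (m + 1) :=
    aux_ent π q hq (fun i : Fin (m + 1) => (⟨i, by omega⟩ : Fin (m + 1 + 1)))
      (fun a b h => by simpa [Fin.ext_iff] using h)
  have e2 : entropy P (fun ωf => (ωf.1, fun i : Fin (m + 1 - 1) => ωf.2 ⟨i, by omega⟩))
      = - auxF π q m :=
    aux_ent π q hq (fun i : Fin m => (⟨i, by omega⟩ : Fin (m + 1 + 1)))
      (fun a b h => by simpa [Fin.ext_iff] using h)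
  have e3 : entropy P (fun ωf => ((ωf.1, ωf.2 (Fin.last (m + 1))),
      fun i : Fin (m + 1) => ωf.2 ⟨i, by omega⟩)) = - auxF π q (m + 2) := by
    rw [← aux_ent π q hq (fun i : Fin (m + 1 + 1) => i) (fun a b h => h)]
    refine aux_entropy_inj P _ _ (fun x : 𝓦 × (Fin (m + 1 + 1) → 𝓩) =>
      ((x.1, x.2 (Fin.last (m + 1))), fun i : Fin (m + 1) => x.2 i.castSucc)) ?_ (fun ω => rfl)
    rintro ⟨a, z⟩ ⟨b, z'⟩ h
    simp only [Prod.mk.injEq] at h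
    have := @aux_split_inj 𝓩 (m + 1) z z' (Prod.ext h.1.2 h.2)
    rw [h.1.1, this]
  have e4 : entropy P (fun ωf => ((ωf.1, ωf.2 ⟨m + 1 - 1, by omega⟩),
      fun i : Fin (m + 1 - 1) => ωf.2 ⟨i, by omega⟩)) = - auxF π q (m + 1) := by
    rw [← e1]
    refine aux_entropy_inj P _ _ (fun x : 𝓦 × (Fin (m + 1) → 𝓩) =>
      ((x.1, x.2 (Fin.last m)), fun i : Fin m => x.2 i.castSucc)) ?_ (fun ω => rfl)
    rintro ⟨a, z⟩ ⟨b, z'⟩ h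
    simp only [Prod.mk.injEq] at h
    have := @aux_split_inj 𝓩 m z z' (Prod.ext h.1.2 h.2)
    rw [h.1.1, this]
  -- exchangeability
  have e5 : entropy P (fun ωf => (ωf.2 (Fin.last (m + 1)),
      fun i : Fin (m + 1 - 1) => ωf.2 ⟨i, by omega⟩))
      = entropy P (fun ωf => fun i : Fin (m + 1) => ωf.2 ⟨i, by omega⟩) := by
    have hinj : Function.Injective (Fin.lastCases (motive := fun _ => Fin (m + 1 + 1))
        (Fin.last (m + 1)) (fun i : Fin m => (⟨i, by omega⟩ : Fin (m + 1 + 1)))) := by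
      intro a b
      refine Fin.lastCases ?_ (fun a => ?_) a <;> refine Fin.lastCases ?_ (fun b => ?_) b <;>
        simp [Fin.ext_iff] <;> omega
    have h := aux_ent' π q hq _ (fun i : Fin (m + 1) => (⟨i, by omega⟩ : Fin (m + 1 + 1)))
      hinj (fun a b h => by simpa [Fin.ext_iff] using h)
    refine Eq.trans ?_ h
    refine aux_entropy_inj P _ _ _ (aux_split_inj m) (fun ω => ?_)
    simp
  have e6 : entropy P (fun ωf => ((ωf.2 (Fin.last (m + 1)), ωf.2 ⟨m + 1 - 1, by omega⟩),
      fun i : Fin (m + 1 - 1) => ωf.2 ⟨i, by omega⟩))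
      = entropy P (fun ωf => (ωf.2 (Fin.last (m + 1)),
          fun i : Fin (m + 1) => ωf.2 ⟨i, by omega⟩)) := by
    refine aux_entropy_inj P _ _ (fun x : 𝓩 × (Fin (m + 1) → 𝓩) =>
      ((x.1, x.2 (Fin.last m)), fun i : Fin m => x.2 i.castSucc)) ?_ (fun ω => rfl)
    rintro ⟨a, z⟩ ⟨b, z'⟩ h
    simp only [Prod.mk.injEq] at h
    have := @aux_split_inj 𝓩 m z z' (Prod.ext h.1.2 h.2)
    rw [h.1.1, this]
  have s1 := auxF_succ π q hq m
  have s2 := auxF_succ π q hq (m + 1)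
  rw [e1, e2, e3, e4, e5, e6]
  linarith
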